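/- For every δ > 0 there exists an instance 𝓘 of the oblivious knapsack problem such that no universal policy for 𝓘 is (2 − δ)-robust, i.e., for every permutation Π of the items of 𝓘 there is a capacity C with 0 ≤ C ≤ l(𝓘) and v(Opt(𝓘,C)) > (2 − δ)·v(Π(C)). -/

import Mathlib

/-!
The instance has `n` items, numbered from `1`, with sizes `l i = F n + F i - 1` (`F` the Fibonacci
numbers) and values `v i = 1 + i / n`. Every choice of the first item `i` of the policy is punished
by a capacity at which `i` fits, but no second item fits next to it, so that the policy earns
only `v i`:

* for `i ≥ 3`, the capacity `l (i-1) + l (i-2) = 2 * F n + F i - 2`, one less than the least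
  possible size of a packing of `i` and another item, while items `i-1` and `i-2` together have
  value `2 * v i - 3 / n`;
* for `i ≤ 2`, the capacity `l n = 2 * F n - 1`, one less than the least size of any two items,
  while item `n` has value `2` and `v i ≤ 1 + 2 / n`.

In both cases the ratio is at least `2 - 4 / n`, and `n` is chosen with `4 / n < δ`.
-/

/-- The packing of a list of items (a universal policy) for capacity `C`:
scan the list in order, starting from the empty packing, and add an item
whenever its size fits into the remaining capacity. -/
def pack {α R : Type*} [LinearOrder R] [Sub R] (size : α → R) : R → List α → List α
  | _, [] => []
  | C, x :: xs => if size x ≤ C then x :: pack size (C - size x) xs else pack size C xs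

/-- If no item fits into the remaining capacity, the packing is empty. -/
theorem pack_eq_nil {α : Type*} (l : α → ℚ) (C : ℚ) (xs : List α) (h : ∀ j ∈ xs, C < l j) :
    pack l C xs = [] := by
  induction xs with
  | nil => rfl
  | cons x xs ih =>
    rw [pack, if_neg (not_le.mpr (h x (by simp)))]
    exact ih fun j hj => h j (by simp [hj])

/-- The size of the item with zero-based index `i`, that is, of item `i + 1`, among `n` items. -/
def itemSize (n i : ℕ) : ℚ := Nat.fib n + Nat.fib (i + 1) - 1

/-- The value of the item with zero-based index `i`, that is, of item `i + 1`, among `n` items. -/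
def itemValue (n i : ℕ) : ℚ := 1 + ((i : ℚ) + 1) / n

theorem one_le_fib_cast {n : ℕ} (hn : 0 < n) : (1 : ℚ) ≤ Nat.fib n := by
  exact_mod_cast Nat.fib_pos.mpr hn

theorem fib_le_itemSize (n i : ℕ) : (Nat.fib n : ℚ) ≤ itemSize n i := by
  have := one_le_fib_cast (Nat.succ_pos i)
  simp only [itemSize, Nat.succ_eq_add_one] at *
  linarith

/-- For every first item `i` there is a set `S` of value at least `(2 - 4 / n) * v i` whose total
size admits `i`, but no second item besides it. -/
theorem exists_punishing_set (n : ℕ) (hn : 3 ≤ n) (i : Fin n) :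
    ∃ S : Finset (Fin n),
      itemSize n i ≤ ∑ j ∈ S, itemSize n j ∧
      (∀ j : Fin n, ∑ j ∈ S, itemSize n j < itemSize n i + itemSize n j) ∧
      (2 - 4 / (n : ℚ)) * itemValue n i ≤ ∑ j ∈ S, itemValue n j := by
  have hn0 : (0 : ℚ) < n := by exact_mod_cast (by omega : 0 < n)
  have hF := one_le_fib_cast (by omega : 0 < n)
  obtain ⟨i, hi⟩ := i
  by_cases h2 : i < 2
  · refine ⟨{⟨n - 1, by omega⟩}, ?_, ?_, ?_⟩
    · have : (Nat.fib (i + 1) : ℚ) ≤ Nat.fib (n - 1 + 1) := by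
        exact_mod_cast Nat.fib_mono (by omega)
      simp only [Finset.sum_singleton, itemSize]
      linarith
    · intro j
      have h1 := fib_le_itemSize n i
      have h3 := fib_le_itemSize n j
      have h4 : itemSize n (n - 1) = 2 * Nat.fib n - 1 := by
        rw [itemSize, Nat.sub_add_cancel (by omega)]; ring
      simp only [Finset.sum_singleton]
      linarith
    · have hv : itemValue n (n - 1) = 2 := by
        rw [itemValue, Nat.cast_sub (by omega)]
        field_simp
        push_cast
        ring
      rw [Finset.sum_singleton, hv, itemValue]
      have hi1 : (i : ℚ) ≤ 1 := by exact_mod_cast (by omega : i ≤ 1)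
      have hn3 : (3 : ℚ) ≤ n := by exact_mod_cast hn
      have e : (2 - 4 / (n : ℚ)) * (1 + ((i : ℚ) + 1) / n)
          = ((2 * n - 4) * (n + i + 1)) / (n * n) := by
        field_simp
        ring
      rw [e, div_le_iff₀ (by positivity)]
      nlinarith
  · obtain ⟨k, rfl⟩ : ∃ k, i = k + 2 := ⟨i - 2, by omega⟩
    have hne : (⟨k + 1, by omega⟩ : Fin n) ≠ ⟨k, by omega⟩ := by simp
    have hfib : (Nat.fib (k + 2 + 1) : ℚ) = Nat.fib (k + 1) + Nat.fib (k + 1 + 1) := by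
      exact_mod_cast Nat.fib_add_two
    refine ⟨{⟨k + 1, by omega⟩, ⟨k, by omega⟩}, ?_, ?_, ?_⟩
    · simp only [Finset.sum_pair hne, itemSize, hfib]
      linarith
    · intro j
      have h3 := fib_le_itemSize n j
      simp only [Finset.sum_pair hne]
      simp only [itemSize, hfib] at *
      linarith
    · simp only [Finset.sum_pair hne, itemValue]
      have hd : (0 : ℚ) ≤ (n : ℚ)⁻¹ * (n : ℚ)⁻¹ * (4 * k + 12) := by positivity
      have hd' : (0 : ℚ) ≤ (n : ℚ)⁻¹ := by positivity
      push_cast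
      simp only [div_eq_mul_inv]
      linarith

/-- For every `δ > 0` there is an instance of the oblivious
knapsack problem on which no universal policy is `(2 − δ)`-robust: for every
permutation `P` of the items there are a capacity `0 ≤ C ≤ l(𝓘)` and a feasible
set `S` with `v(S) > (2 − δ)·v(P(C))`. -/
theorem no_two_minus_delta_robust_policy (δ : ℚ) (hδ : 0 < δ) :
    ∃ (n : ℕ) (v l : Fin n → ℚ), (∀ i, 0 ≤ v i) ∧ (∀ i, 0 < l i) ∧
      ∀ P : List (Fin n), P.Nodup → (∀ i, i ∈ P) →
        ∃ C : ℚ, 0 ≤ C ∧ C ≤ ∑ i, l i ∧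
          ∃ S : Finset (Fin n), ∑ i ∈ S, l i ≤ C ∧
            (2 - δ) * ((pack l C P).map v).sum < ∑ i ∈ S, v i := by
  obtain ⟨k, hk⟩ := exists_nat_gt (4 / δ)
  set n := k + 3 with hn
  have hn0 : (0 : ℚ) < n := by positivity
  have hnδ : 4 / (n : ℚ) < δ := by
    rw [div_lt_iff₀ hδ] at hk
    rw [div_lt_iff₀ hn0, hn]
    push_cast
    linarith
  have hl : ∀ i : Fin n, 0 < itemSize n i := fun i =>
    lt_of_lt_of_le (by linarith [one_le_fib_cast (by omega : 0 < n)]) (fib_le_itemSize n i)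
  have hv : ∀ i : Fin n, 0 < itemValue n i := fun i => by unfold itemValue; positivity
  refine ⟨n, fun i => itemValue n i, fun i => itemSize n i, fun i => (hv i).le, hl, ?_⟩
  intro P _ hP
  cases P with
  | nil => exact absurd (hP ⟨0, by omega⟩) (by simp)
  | cons i xs =>
    obtain ⟨S, hfit, hblock, hval⟩ := exists_punishing_set n (by omega) i
    refine ⟨∑ j ∈ S, itemSize n j, Finset.sum_nonneg fun j _ => (hl j).le,
      Finset.sum_le_sum_of_subset_of_nonneg (Finset.subset_univ S) fun j _ _ => (hl j).le,
      S, le_rfl, ?_⟩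
    rw [pack, if_pos hfit, pack_eq_nil _ _ xs fun j _ => by linarith [hblock j]]
    simp only [List.map_cons, List.map_nil, List.sum_cons, List.sum_nil, add_zero]
    exact lt_of_lt_of_le (mul_lt_mul_of_pos_right (by linarith) (hv i)) hval
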